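/- Any two locally finite trees, each having infinitely many ends and only finitely many orbits of vertices under its automorphism group, are quasi-isometric. -/

import Mathlib

open SimpleGraph

universe u v

/-! ### Quasi-isometries -/

/-- `f` is a `(γ, c)`-quasi-isometry from `G` to `H`. -/
def IsQIWith {V : Type u} {W : Type v} (G : SimpleGraph V) (H : SimpleGraph W)
    (γ c : ℝ) (f : V → W) : Prop :=
  (∀ u v : V, γ⁻¹ * (G.dist u v : ℝ) - c ≤ (H.dist (f u) (f v) : ℝ) ∧
      (H.dist (f u) (f v) : ℝ) ≤ γ * (G.dist u v : ℝ) + c) ∧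
  ∀ w : W, ∃ x : V, (H.dist w (f x) : ℝ) ≤ c

/-- `G` and `H` are quasi-isometric. -/
def QuasiIsometric {V : Type u} {W : Type v} (G : SimpleGraph V) (H : SimpleGraph W) : Prop :=
  ∃ (γ c : ℝ) (f : V → W), 1 ≤ γ ∧ 0 ≤ c ∧ IsQIWith G H γ c f

/-- `H` embeds quasi-isometrically into `G`. -/
def QIEmbeds {V : Type u} {W : Type v} (H : SimpleGraph V) (G : SimpleGraph W) : Prop :=
  ∃ (γ c : ℝ) (f : V → W), 1 ≤ γ ∧ 0 ≤ c ∧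
    ∀ u v : V, γ⁻¹ * (H.dist u v : ℝ) - c ≤ (G.dist (f u) (f v) : ℝ) ∧
      (G.dist (f u) (f v) : ℝ) ≤ γ * (H.dist u v : ℝ) + c

/-! ### Basic graph properties -/

/-- Every vertex has finite degree. -/
def LocallyFiniteGraph {V : Type u} (G : SimpleGraph V) : Prop :=
  ∀ v : V, (G.neighborSet v).Finite

/-- The automorphism group of `G` has finitely many orbits on the vertex set. -/
def QuasiTransitive {V : Type u} (G : SimpleGraph V) : Prop :=
  ∃ s : Set V, s.Finite ∧ ∀ v : V, ∃ u ∈ s, ∃ g : G ≃g G, g u = v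

/-- The automorphism group of `G` acts transitively on the vertex set. -/
def VertexTransitive {V : Type u} (G : SimpleGraph V) : Prop :=
  ∀ u v : V, ∃ g : G ≃g G, g u = v

/-- `G` has exactly one end. -/
def OneEnded {V : Type u} (G : SimpleGraph V) : Prop :=
  Nonempty G.end ∧ Subsingleton G.end

/-- `G` and `H` have the same number of ends (in the sense `0, 1, 2, …, ∞`). -/
def SameNumberOfEnds {V : Type u} {W : Type v} (G : SimpleGraph V) (H : SimpleGraph W) : Prop :=
  (Infinite G.end ∧ Infinite H.end) ∨
    (Finite G.end ∧ Finite H.end ∧ Nat.card G.end = Nat.card H.end)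

/-- There is `n : ℕ` such that every two distinct ends of `G` can be separated by removing
at most `n` vertices. -/
def Accessible {V : Type u} (G : SimpleGraph V) : Prop :=
  ∃ n : ℕ, ∀ e e' : G.end, e ≠ e' →
    ∃ K : Finset V, K.card ≤ n ∧ e.val (Opposite.op K) ≠ e'.val (Opposite.op K)

/-- `T` is a tree all of whose vertices have degree `3`. -/
def CubicTree {W : Type u} (T : SimpleGraph W) : Prop :=
  T.IsTree ∧ ∀ v : W, (T.neighborSet v).ncard = 3

/-! ### Tree amalgamations -/

/-- The bipartite graph on `VT1 ⊕ VT2` given by the relation `R`. -/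
def bipGraph {VT1 VT2 : Type u} (R : VT1 → VT2 → Prop) : SimpleGraph (VT1 ⊕ VT2) :=
  SimpleGraph.fromRel fun x y =>
    match x, y with
    | Sum.inl a, Sum.inr b => R a b
    | _, _ => False

/-- All the data of a tree amalgamation `G1 ∗_T G2`: a semiregular tree (given by its
bipartition classes `VT1`, `VT2` and the adjacency relation `Tadj`), a labelling of the
edges of the tree by pairs of indices from `K1 × K2` such that the labels at each vertex of
`VTi` biject with `Ki` in the `i`-th coordinate, families of adhesion sets `S1`, `S2`
(all of the same cardinality), and the gluing bijections `glue k l : S1 k → S2 l`. -/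
structure TreeAmalgData {V1 V2 : Type u} (G1 : SimpleGraph V1) (G2 : SimpleGraph V2) :
    Type (u + 1) where
  VT1 : Type u
  VT2 : Type u
  K1 : Type u
  K2 : Type u
  Tadj : VT1 → VT2 → Prop
  isTree : (bipGraph Tadj).IsTree
  lab1 : ∀ a b, Tadj a b → K1
  lab2 : ∀ a b, Tadj a b → K2
  lab1_bij : ∀ a : VT1, Function.Bijective fun b : {b : VT2 // Tadj a b} => lab1 a b.1 b.2
  lab2_bij : ∀ b : VT2, Function.Bijective fun a : {a : VT1 // Tadj a b} => lab2 a.1 b a.2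
  S1 : K1 → Set V1
  S2 : K2 → Set V2
  S1_nonempty : ∀ k, (S1 k).Nonempty
  glue : K1 → K2 → V1 → V2
  glue_bij : ∀ k l, Set.BijOn (glue k l) (S1 k) (S2 l)

namespace TreeAmalgData

variable {V1 V2 : Type u} {G1 : SimpleGraph V1} {G2 : SimpleGraph V2}

/-- The vertex set of the graph `G1 + G2`. -/
abbrev PlusV (D : TreeAmalgData G1 G2) : Type u := (D.VT1 × V1) ⊕ (D.VT2 × V2)

/-- The relation describing the edges added between the copies `G1^u` and `G2^v`. -/
def cross (D : TreeAmalgData G1 G2) (p : D.VT1 × V1) (q : D.VT2 × V2) : Prop :=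
  ∃ h : D.Tadj p.1 q.1, p.2 ∈ D.S1 (D.lab1 p.1 q.1 h) ∧
    q.2 = D.glue (D.lab1 p.1 q.1 h) (D.lab2 p.1 q.1 h) p.2

def plusRel (D : TreeAmalgData G1 G2) : D.PlusV → D.PlusV → Prop
  | Sum.inl p, Sum.inl p' => p.1 = p'.1 ∧ G1.Adj p.2 p'.2
  | Sum.inr q, Sum.inr q' => q.1 = q'.1 ∧ G2.Adj q.2 q'.2
  | Sum.inl p, Sum.inr q => D.cross p q
  | Sum.inr _, Sum.inl _ => False

/-- The graph `G1 + G2`: disjoint copies of `G1` and `G2` along the tree, together with the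
added matching edges between adhesion sets. -/
def plusGraph (D : TreeAmalgData G1 G2) : SimpleGraph D.PlusV :=
  SimpleGraph.fromRel D.plusRel

/-- The relation identifying the endpoints of the added edges (which get contracted). -/
def idRel (D : TreeAmalgData G1 G2) : D.PlusV → D.PlusV → Prop :=
  fun x y => ∃ p q, x = Sum.inl p ∧ y = Sum.inr q ∧ D.cross p q

/-- Vertex set of the tree amalgamation `G1 ∗_T G2`. -/
abbrev AmalgV (D : TreeAmalgData G1 G2) : Type u := Quot D.idRel

/-- The canonical contraction map `ψ : V(G1 + G2) → V(G1 ∗_T G2)`. -/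
def toAmalg (D : TreeAmalgData G1 G2) : D.PlusV → D.AmalgV := Quot.mk _

/-- The tree amalgamation `G1 ∗_T G2`, obtained from `G1 + G2` by contracting all the
added edges. -/
def amalgGraph (D : TreeAmalgData G1 G2) : SimpleGraph D.AmalgV :=
  SimpleGraph.fromRel fun x y =>
    ∃ a b, x = D.toAmalg a ∧ y = D.toAmalg b ∧ D.plusGraph.Adj a b

/-- The tree vertex at which a vertex of `G1 + G2` lives. -/
def site (D : TreeAmalgData G1 G2) : D.PlusV → D.VT1 ⊕ D.VT2
  | Sum.inl p => Sum.inl p.1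
  | Sum.inr q => Sum.inr q.1

/-- The set of tree vertices hosting representatives of `x`; the identification size of `x`
is the number of its elements. -/
def support (D : TreeAmalgData G1 G2) (x : D.AmalgV) : Set (D.VT1 ⊕ D.VT2) :=
  {t | ∃ p, D.toAmalg p = x ∧ D.site p = t}

/-- Every vertex of `G1 ∗_T G2` has finite identification size. -/
def FiniteIdentification (D : TreeAmalgData G1 G2) : Prop :=
  ∀ x : D.AmalgV, (D.support x).Finite

/-- All adhesion sets are finite. -/
def FiniteAdhesion (D : TreeAmalgData G1 G2) : Prop :=
  (∀ k, (D.S1 k).Finite) ∧ ∀ l, (D.S2 l).Finite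

/-- The tree amalgamation is trivial: the contraction map restricts to a bijection on some
copy of `G1` or of `G2`. -/
def IsTrivial (D : TreeAmalgData G1 G2) : Prop :=
  (∃ a : D.VT1, Function.Bijective fun x : V1 => D.toAmalg (Sum.inl (a, x))) ∨
  ∃ b : D.VT2, Function.Bijective fun y : V2 => D.toAmalg (Sum.inr (b, y))

end TreeAmalgData

/-- Some group of automorphisms of `G` acts with finitely many orbits on the vertices of `G`
and with finitely many orbits on the family `S` of adhesion sets of `G`. -/
def GoodAction {V : Type u} (G : SimpleGraph V) {K : Type u} (S : K → Set V) : Prop :=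
  ∃ Γ : Subgroup (G ≃g G),
    (∃ s : Set V, s.Finite ∧ ∀ v : V, ∃ u ∈ s, ∃ g ∈ Γ, g u = v) ∧
    ∃ I : Set K, I.Finite ∧ ∀ k : K, ∃ k' ∈ I, ∃ g ∈ Γ, ⇑g '' S k' = S k

/-- A bundled graph. -/
structure BGraph : Type (u + 1) where
  V : Type u
  G : SimpleGraph V

/-- `Z` is (isomorphic to) a tree amalgamation of `X` and `Y` of finite adhesion and finite
identification. -/
def AmalgStep (X Y Z : BGraph.{u}) : Prop :=
  ∃ D : TreeAmalgData X.G Y.G,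
    D.FiniteAdhesion ∧ D.FiniteIdentification ∧ Nonempty (Z.G ≃g D.amalgGraph)

/-- `Z` is (isomorphic to) a tree amalgamation of `X` and `Y` of finite adhesion and finite
identification such that some group of automorphisms of each factor acts with finitely many
orbits on that factor and on the set of its adhesion sets. -/
def GoodAmalgStep (X Y Z : BGraph.{u}) : Prop :=
  ∃ D : TreeAmalgData X.G Y.G,
    D.FiniteAdhesion ∧ D.FiniteIdentification ∧
    GoodAction X.G D.S1 ∧ GoodAction Y.G D.S2 ∧ Nonempty (Z.G ≃g D.amalgGraph)

/-- `Z` is obtained from the list `l` of graphs by iterated tree amalgamations of finite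
adhesion and finite identification. -/
inductive IterAmalg : BGraph.{u} → List BGraph.{u} → Prop
  | single (X : BGraph) : IterAmalg X [X]
  | step {X Y Z : BGraph} {l1 l2 : List BGraph} :
      IterAmalg X l1 → IterAmalg Y l2 → AmalgStep X Y Z → IterAmalg Z (l1 ++ l2)

/-- `Z` is obtained from the list `l` of graphs by iterated tree amalgamations of finite
adhesion and finite identification with quasi-transitive actions on the factors and their
adhesion sets. -/
inductive GoodIterAmalg : BGraph.{u} → List BGraph.{u} → Prop
  | single (X : BGraph) : GoodIterAmalg X [X]
  | step {X Y Z : BGraph} {l1 l2 : List BGraph} :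
      GoodIterAmalg X l1 → GoodIterAmalg Y l2 → GoodAmalgStep X Y Z →
        GoodIterAmalg Z (l1 ++ l2)

/-- `l` is a factorisation of the graph `Gb`. -/
def IsFactorisation (Gb : BGraph.{u}) (l : List BGraph.{u}) : Prop :=
  (∀ X ∈ l, X.G.Connected ∧ LocallyFiniteGraph X.G ∧ QuasiTransitive X.G) ∧
    GoodIterAmalg Gb l

/-- A factorisation is terminal if every factor has at most one end. -/
def IsTerminal (l : List BGraph.{u}) : Prop := ∀ X ∈ l, Subsingleton X.G.end

/-!
Both trees are quasi-isometric to the infinite binary tree.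

In a tree with three ends some finite set separates three infinite branches from one another. Since
finitely many orbits cover the tree, translates of this set occur within a bounded distance `N` of
every vertex. Root the tree, put `K = 2 * N + 2`, and keep only the vertices which have infinitely
many descendants and whose depth is a multiple of `K`. Every vertex lies near a kept one, so the
tree formed by the kept vertices is quasi-isometric to the original tree. A kept vertex has at least
two kept vertices `K` levels below it, because a branching place `N + 1` levels below it splits off
two infinite branches, and the number of such vertices is bounded since degrees are.

Finally, a rooted tree in which every vertex has at least two and at most `M` children becomes the
binary tree once each vertex with `n + 2` children is replaced by a path of `n + 1` vertices.
-/

/-! ### Quasi-isometries of connected graphs -/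

section QuasiIsometry

variable {V W Z : Type*} {G : SimpleGraph V} {H : SimpleGraph W} {J : SimpleGraph Z}

theorem dist_map_le_mul_dist (hG : G.Connected) (hH : H.Connected) {f : V → W} {L : ℕ}
    (hf : ∀ u v, G.Adj u v → H.dist (f u) (f v) ≤ L) (u v : V) :
    H.dist (f u) (f v) ≤ L * G.dist u v := by
  obtain ⟨w, hw⟩ := hG.exists_walk_length_eq_dist u v
  rw [← hw]
  clear hw
  induction w with
  | nil => simp
  | @cons u v t huv w ih =>
    calc H.dist (f u) (f t) ≤ H.dist (f u) (f v) + H.dist (f v) (f t) := hH.dist_triangle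
      _ ≤ L + L * w.length := add_le_add (hf u v huv) ih
      _ = L * (w.cons huv).length := by rw [Walk.length_cons]; ring

theorem quasiIsometric_of_surjective (hG : G.Connected) (hH : H.Connected) {f : V → W}
    (hf : f.Surjective) {L : ℕ} (hadj : ∀ u v, G.Adj u v → H.dist (f u) (f v) ≤ L)
    (hfiber : ∀ u v, H.dist (f u) (f v) ≤ 1 → G.dist u v ≤ L) : QuasiIsometric G H := by
  obtain ⟨g, hg⟩ := hf.hasRightInverse
  have hsection (w w' : W) (h : H.Adj w w') : G.dist (g w) (g w') ≤ L :=
    hfiber _ _ (by rw [hg, hg]; exact (dist_eq_one_iff_adj.2 h).le)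
  refine ⟨L + 1, 2, f, by simp, by simp, fun u v => ?_, fun w => ?_⟩
  · have upper : H.dist (f u) (f v) ≤ L * G.dist u v := dist_map_le_mul_dist hG hH hadj u v
    have near (u : V) : G.dist u (g (f u)) ≤ L := hfiber _ _ (by simp [hg (f u)])
    have lower : G.dist u v ≤ L * H.dist (f u) (f v) + 2 * L := by
      have h₁ := hG.dist_triangle (u := u) (v := g (f u)) (w := v)
      have h₂ := hG.dist_triangle (u := g (f u)) (v := g (f v)) (w := v)
      rw [dist_comm (u := g (f v))] at h₂
      linarith [near u, near v, dist_map_le_mul_dist hH hG hsection (f u) (f v)]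
    rify at upper lower
    constructor
    · rw [sub_le_iff_le_add, inv_mul_le_iff₀ (by positivity)]
      linarith [(H.dist (f u) (f v)).cast_nonneg (α := ℝ)]
    · linarith [(G.dist u v).cast_nonneg (α := ℝ)]
  · obtain ⟨v, rfl⟩ := hf w
    exact ⟨v, by simp⟩

theorem QuasiIsometric.symm (hH : H.Connected) (h : QuasiIsometric G H) : QuasiIsometric H G := by
  obtain ⟨γ, c, f, hγ, hc, hf, hdense⟩ := h
  have hγ₀ : 0 < γ := by linarith
  choose g hg using hdense
  have tri (x y z : W) : (H.dist x z : ℝ) ≤ H.dist x y + H.dist y z :=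
    mod_cast hH.dist_triangle
  have hdist (u v : V) : (G.dist u v : ℝ) ≤ γ * (H.dist (f u) (f v) + c) := by
    rw [← inv_mul_le_iff₀ hγ₀]
    linarith [(hf u v).1]
  refine ⟨γ, 3 * γ * c, g, hγ, by positivity, fun w w' => ⟨?_, ?_⟩, fun v => ⟨f v, ?_⟩⟩
  · rw [sub_le_iff_le_add, inv_mul_le_iff₀ hγ₀]
    have h₁ := tri w (f (g w)) w'
    have h₂ := tri (f (g w)) (f (g w')) w'
    rw [dist_comm (u := f (g w'))] at h₂
    have h₃ : 0 ≤ (γ - 1) * (γ + 1) * c := by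
      have := sub_nonneg.2 hγ
      positivity
    nlinarith [hg w, hg w', (hf (g w) (g w')).2]
  · have h₁ := tri (f (g w)) w (f (g w'))
    have h₂ := tri w w' (f (g w'))
    rw [dist_comm (u := f (g w)) (v := w)] at h₁
    calc (G.dist (g w) (g w') : ℝ) ≤ γ * (H.dist (f (g w)) (f (g w')) + c) := hdist _ _
      _ ≤ γ * ((c + (H.dist w w' + c)) + c) := by gcongr; linarith [hg w, hg w']
      _ = γ * H.dist w w' + 3 * γ * c := by ring
  · calc (G.dist v (g (f v)) : ℝ) ≤ γ * (H.dist (f v) (f (g (f v))) + c) := hdist _ _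
      _ ≤ γ * (c + c) := by gcongr; exact hg (f v)
      _ ≤ 3 * γ * c := by nlinarith [mul_nonneg hγ₀.le hc]

theorem QuasiIsometric.trans (hJ : J.Connected) (h : QuasiIsometric G H)
    (h' : QuasiIsometric H J) : QuasiIsometric G J := by
  obtain ⟨γ, c, f, hγ, hc, hf, hdense⟩ := h
  obtain ⟨γ', c', f', hγ', hc', hf', hdense'⟩ := h'
  have : 0 < γ' := by linarith
  refine ⟨γ' * γ, γ' * c + 2 * c', f' ∘ f, one_le_mul_of_one_le_of_one_le hγ' hγ, by positivity,
    fun u v => ⟨?_, ?_⟩, fun z => ?_⟩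
  · have hcc : γ'⁻¹ * c ≤ γ' * c := by
      gcongr
      exact (inv_le_one_of_one_le₀ hγ').trans hγ'
    calc (γ' * γ)⁻¹ * (G.dist u v : ℝ) - (γ' * c + 2 * c')
        ≤ γ'⁻¹ * (γ⁻¹ * G.dist u v - c) - c' := by rw [mul_inv]; linarith
      _ ≤ γ'⁻¹ * H.dist (f u) (f v) - c' := by gcongr; exact (hf u v).1
      _ ≤ J.dist (f' (f u)) (f' (f v)) := (hf' _ _).1
  · calc (J.dist (f' (f u)) (f' (f v)) : ℝ) ≤ γ' * H.dist (f u) (f v) + c' := (hf' _ _).2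
      _ ≤ γ' * (γ * G.dist u v + c) + c' := by gcongr; exact (hf u v).2
      _ ≤ γ' * γ * G.dist u v + (γ' * c + 2 * c') := by linarith
  · obtain ⟨w, hw⟩ := hdense' z
    obtain ⟨v, hv⟩ := hdense w
    refine ⟨v, ?_⟩
    calc (J.dist z (f' (f v)) : ℝ) ≤ J.dist z (f' w) + J.dist (f' w) (f' (f v)) :=
          mod_cast hJ.dist_triangle
      _ ≤ c' + (γ' * c + c') := by
          gcongr
          exact (hf' _ _).2.trans (by gcongr)
      _ = γ' * c + 2 * c' := by ring

end QuasiIsometry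

/-! ### Rooted trees -/

/-- A rooted tree, encoded by the map sending each vertex to its parent; the root is its own
parent, and every vertex reaches the root by iterating. -/
structure ParentMap (V : Type*) where
  root : V
  parent : V → V
  parent_root : parent root = root
  exists_iterate_eq_root : ∀ v, ∃ n, parent^[n] v = root

namespace ParentMap

variable {V : Type*} (P : ParentMap V) {b u v x y : V} {k n : ℕ}

/-- The tree joining each vertex to its parent; `fromRel` discards the loop at the root. -/
def graph : SimpleGraph V := fromRel fun u v => P.parent u = v

/-- The number of steps from a vertex up to the root. -/
noncomputable def depth (v : V) : ℕ := sInf {n | P.parent^[n] v = P.root}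

/-- The vertices one step below `x`; the root is not a child of itself. -/
def children (x : V) : Set V := {v | v ≠ P.root ∧ P.parent v = x}

/-- The vertices weakly below `x`, that is, the branch at `x`. -/
def descendants (x : V) : Set V := {v | ∃ n, P.parent^[n] v = x}

/-- The vertices exactly `k` steps below `x`. The condition on depths matters only when `x` is the
root, which every vertex reaches after any sufficiently large number of steps. -/
def level (x : V) (k : ℕ) : Set V := {v | P.depth v = P.depth x + k ∧ P.parent^[k] v = x}

theorem iterate_parent_root (n : ℕ) : P.parent^[n] P.root = P.root :=
  Function.iterate_fixed P.parent_root n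

theorem iterate_depth (v : V) : P.parent^[P.depth v] v = P.root :=
  Nat.sInf_mem (P.exists_iterate_eq_root v)

theorem depth_root : P.depth P.root = 0 := Nat.sInf_eq_zero.2 (Or.inl rfl)

theorem depth_le_iff : P.depth v ≤ n ↔ P.parent^[n] v = P.root := by
  refine ⟨fun h => ?_, fun h => Nat.sInf_le h⟩
  rw [← Nat.sub_add_cancel h, Function.iterate_add_apply, P.iterate_depth, P.iterate_parent_root]

theorem depth_parent (v : V) : P.depth (P.parent v) = P.depth v - 1 := by
  refine eq_of_forall_ge_iff fun n => ?_
  rw [depth_le_iff, ← Function.iterate_succ_apply, ← depth_le_iff, Nat.sub_le_iff_le_add]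

theorem depth_iterate (n : ℕ) (v : V) : P.depth (P.parent^[n] v) = P.depth v - n := by
  induction n with
  | zero => rfl
  | succ n ih => rw [Function.iterate_succ_apply', depth_parent, ih, Nat.sub_sub]

theorem depth_pos (hv : v ≠ P.root) : 0 < P.depth v :=
  Nat.pos_of_ne_zero fun h => hv (P.depth_le_iff.1 h.le)

theorem depth_parent_add_one (hv : v ≠ P.root) : P.depth (P.parent v) + 1 = P.depth v := by
  rw [depth_parent, Nat.sub_add_cancel (P.depth_pos hv)]

theorem induction_parent {motive : V → Prop} (root : motive P.root)
    (step : ∀ v, v ≠ P.root → motive (P.parent v) → motive v) (v : V) : motive v := by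
  induction h : P.depth v generalizing v with
  | zero => rwa [show v = P.root from P.depth_le_iff.1 h.le]
  | succ n ih =>
    have hv : v ≠ P.root := by rintro rfl; simp [P.depth_root] at h
    exact step v hv (ih _ (by rw [depth_parent, h, Nat.add_sub_cancel]))

theorem graph_adj : P.graph.Adj u v ↔ u ≠ v ∧ (P.parent u = v ∨ P.parent v = u) :=
  fromRel_adj _ _ _

theorem adj_of_mem_children (h : y ∈ P.children x) : P.graph.Adj x y := by
  refine P.graph_adj.2 ⟨?_, Or.inr h.2⟩
  rintro rfl
  have := P.depth_parent_add_one h.1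
  rw [h.2] at this
  omega

theorem connected_graph : P.graph.Connected := by
  have hroot (v : V) : P.graph.Reachable P.root v := by
    induction v using P.induction_parent with
    | root => exact .refl _
    | step v hv ih => exact ih.trans (P.adj_of_mem_children ⟨hv, rfl⟩).reachable
  exact (connected_iff _).2 ⟨fun u v => (hroot u).symm.trans (hroot v), ⟨P.root⟩⟩

theorem dist_le_one_iff :
    P.graph.dist u v ≤ 1 ↔ u = v ∨ u ∈ P.children v ∨ v ∈ P.children u := by
  rw [Nat.le_one_iff_eq_zero_or_eq_one, P.connected_graph.dist_eq_zero_iff, dist_eq_one_iff_adj]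
  refine or_congr_right ⟨fun h => ?_, ?_⟩
  · rcases P.graph_adj.1 h with ⟨hne, rfl | rfl⟩
    · exact Or.inl ⟨fun hu => hne (by rw [hu, parent_root]), rfl⟩
    · exact Or.inr ⟨fun hv => hne (by rw [hv, parent_root]), rfl⟩
  · rintro (h | h)
    exacts [(P.adj_of_mem_children h).symm, P.adj_of_mem_children h]

theorem dist_parent_le (v : V) : P.graph.dist v (P.parent v) ≤ 1 := by
  by_cases hv : v = P.root
  · simp [hv, parent_root]
  · exact P.dist_le_one_iff.2 (Or.inr (Or.inl ⟨hv, rfl⟩))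

theorem dist_iterate_le (n : ℕ) (v : V) : P.graph.dist v (P.parent^[n] v) ≤ n := by
  induction n with
  | zero => simp
  | succ n ih =>
    rw [Function.iterate_succ_apply']
    exact P.connected_graph.dist_triangle.trans (add_le_add ih (P.dist_parent_le _))

theorem depth_le_depth_add_dist (u v : V) : P.depth u ≤ P.depth v + P.graph.dist u v := by
  obtain ⟨w, hw⟩ := P.connected_graph.exists_walk_length_eq_dist u v
  rw [← hw]
  clear hw
  induction w with
  | nil => simp
  | @cons u v t huv w ih =>
    have : P.depth u ≤ P.depth v + 1 := by
      rcases (P.graph_adj.1 huv).2 with rfl | rfl <;> rw [depth_parent] <;> omega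
    rw [Walk.length_cons]
    omega

theorem descendants_root : P.descendants P.root = Set.univ :=
  Set.eq_univ_of_forall P.exists_iterate_eq_root

theorem self_mem_descendants (x : V) : x ∈ P.descendants x := ⟨0, rfl⟩

theorem descendants_subset (h : y ∈ P.descendants x) : P.descendants y ⊆ P.descendants x := by
  rintro z ⟨m, rfl⟩
  obtain ⟨n, rfl⟩ := h
  exact ⟨n + m, Function.iterate_add_apply _ _ _ _⟩

theorem level_subset_descendants : P.level x k ⊆ P.descendants x := fun _ h => ⟨k, h.2⟩

theorem depth_le_of_mem_descendants (h : y ∈ P.descendants x) : P.depth x ≤ P.depth y := by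
  obtain ⟨n, rfl⟩ := h
  rw [depth_iterate]
  exact Nat.sub_le _ _

theorem parent_mem_level (h : y ∈ P.level x (k + 1)) : P.parent y ∈ P.level x k :=
  ⟨by rw [depth_parent, h.1]; rfl, h.2⟩

theorem ne_root_of_mem_level_succ (h : y ∈ P.level x (k + 1)) : y ≠ P.root := by
  rintro rfl
  exact absurd h.1 (by rw [depth_root]; omega)

theorem mem_level_succ (hx : x ∈ P.level b k) (hy : y ∈ P.children x) :
    y ∈ P.level b (k + 1) := by
  obtain ⟨hroot, rfl⟩ := hy
  refine ⟨?_, hx.2⟩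
  rw [← P.depth_parent_add_one hroot, hx.1]
  ring

theorem descendants_subset_insert_biUnion (x : V) :
    P.descendants x ⊆ insert x (⋃ y ∈ P.children x, P.descendants y) := by
  rintro v ⟨n, hn⟩
  induction n generalizing v with
  | zero => exact Or.inl hn
  | succ n ih =>
    by_cases hv : v = P.root
    · rw [hv, iterate_parent_root] at hn
      exact Or.inl (hv.trans hn)
    · refine Or.inr (Set.mem_iUnion₂.2 ?_)
      rcases ih hn with h | h
      · exact ⟨v, ⟨hv, h⟩, P.self_mem_descendants v⟩
      · obtain ⟨y, hy, h⟩ := Set.mem_iUnion₂.1 h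
        exact ⟨y, hy, P.descendants_subset h ⟨1, rfl⟩⟩

theorem exists_mem_level_inter_infinite (hfin : ∀ v, (P.graph.neighborSet v).Finite) {C : Set V}
    (hC : (C ∩ P.descendants b).Infinite) (k : ℕ) :
    ∃ x ∈ P.level b k, (C ∩ P.descendants x).Infinite := by
  induction k with
  | zero => exact ⟨b, ⟨rfl, rfl⟩, hC⟩
  | succ k ih =>
    obtain ⟨x, hx, hinf⟩ := ih
    suffices ∃ y ∈ P.children x, (C ∩ P.descendants y).Infinite by
      obtain ⟨y, hy, hinf⟩ := this
      exact ⟨y, P.mem_level_succ hx hy, hinf⟩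
    by_contra! hcon
    refine hinf ((((hfin x).subset fun y => P.adj_of_mem_children).biUnion hcon).insert x
      |>.subset ?_)
    rintro v ⟨hvC, hvx⟩
    refine (P.descendants_subset_insert_biUnion x hvx).imp_right fun hv => ?_
    simp only [Set.mem_iUnion, Set.mem_inter_iff, exists_prop] at hv ⊢
    exact hv.imp fun y hy => ⟨hy.1, hvC, hy.2⟩

theorem exists_walk_iterate (n : ℕ) (v : V) :
    ∃ w : P.graph.Walk v (P.parent^[n] v), ∀ z ∈ w.support, ∃ m ≤ n, P.parent^[m] v = z := by
  induction n with
  | zero => exact ⟨.nil, by simp⟩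
  | succ n ih =>
    obtain ⟨w, hw⟩ := ih
    rw [Function.iterate_succ_apply']
    by_cases h : P.parent^[n] v = P.root
    · refine ⟨w.copy rfl (by rw [h, parent_root]), fun z hz => ?_⟩
      rw [Walk.support_copy] at hz
      exact (hw z hz).imp fun m hm => ⟨hm.1.trans n.le_succ, hm.2⟩
    · refine ⟨w.concat (P.adj_of_mem_children ⟨h, rfl⟩).symm, fun z hz => ?_⟩
      rw [Walk.support_concat, List.mem_append, List.mem_singleton] at hz
      rcases hz with hz | rfl
      · exact (hw z hz).imp fun m hm => ⟨hm.1.trans n.le_succ, hm.2⟩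
      · exact ⟨n + 1, le_rfl, Function.iterate_succ_apply' _ _ _⟩

theorem exists_walk_in_descendants (hu : u ∈ P.descendants x) (hv : v ∈ P.descendants x) :
    ∃ w : P.graph.Walk u v, ∀ z ∈ w.support, z ∈ P.descendants x := by
  have climb {v : V} (hv : v ∈ P.descendants x) :
      ∃ w : P.graph.Walk v x, ∀ z ∈ w.support, z ∈ P.descendants x := by
    obtain ⟨n, rfl⟩ := hv
    obtain ⟨w, hw⟩ := P.exists_walk_iterate n v
    refine ⟨w, fun z hz => ?_⟩
    obtain ⟨m, hm, rfl⟩ := hw z hz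
    exact ⟨n - m, by rw [← Function.iterate_add_apply, Nat.sub_add_cancel hm]⟩
  obtain ⟨w, hw⟩ := climb hu
  obtain ⟨w', hw'⟩ := climb hv
  refine ⟨w.append w'.reverse, fun z hz => ?_⟩
  rw [Walk.mem_support_append_iff, Walk.support_reverse, List.mem_reverse] at hz
  exact hz.elim (hw z) (hw' z)

theorem exists_walk_in_compl_descendants (hu : u ∉ P.descendants x) (hv : v ∉ P.descendants x) :
    ∃ w : P.graph.Walk u v, ∀ z ∈ w.support, z ∉ P.descendants x := by
  have climb {v : V} (hv : v ∉ P.descendants x) :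
      ∃ w : P.graph.Walk v P.root, ∀ z ∈ w.support, z ∉ P.descendants x := by
    obtain ⟨w, hw⟩ := P.exists_walk_iterate (P.depth v) v
    refine ⟨w.copy rfl (P.iterate_depth v), fun z hz hzx => hv ?_⟩
    rw [Walk.support_copy] at hz
    obtain ⟨m, -, rfl⟩ := hw z hz
    exact P.descendants_subset hzx ⟨m, rfl⟩
  obtain ⟨w, hw⟩ := climb hu
  obtain ⟨w', hw'⟩ := climb hv
  refine ⟨w.append w'.reverse, fun z hz => ?_⟩
  rw [Walk.mem_support_append_iff, Walk.support_reverse, List.mem_reverse] at hz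
  exact hz.elim (hw z) (hw' z)

theorem mem_support_of_walk_leaving_descendants (hu : u ∈ P.descendants x)
    (hv : v ∉ P.descendants x) (w : P.graph.Walk u v) : x ∈ w.support := by
  obtain ⟨d, hd, ⟨n, hn⟩, hsnd⟩ := w.exists_boundary_dart _ hu hv
  suffices d.fst = x from this ▸ w.dart_fst_mem_support_of_mem_darts hd
  rcases (P.graph_adj.1 d.adj).2 with h | h
  · cases n with
    | zero => exact hn
    | succ n => exact absurd ⟨n, by rw [← h, ← Function.iterate_succ_apply, hn]⟩ hsnd
  · exact absurd ⟨n + 1, by rw [Function.iterate_succ_apply, h, hn]⟩ hsnd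

theorem mem_descendants_of_dist_le (hx : x ∈ P.descendants y) (hdepth : P.depth y + n < P.depth x)
    (hv : P.graph.dist x v ≤ n) : v ∈ P.descendants y := by
  by_contra hvy
  obtain ⟨w, hw⟩ := P.connected_graph.exists_walk_length_eq_dist x v
  obtain ⟨p, q, rfl⟩ :=
    Walk.mem_support_iff_exists_append.1 (P.mem_support_of_walk_leaving_descendants hx hvy w)
  rw [Walk.length_append] at hw
  linarith [dist_le p, P.depth_le_depth_add_dist x y]

end ParentMap

theorem exists_parentMap_graph_eq {V : Type*} {T : SimpleGraph V} (hT : T.IsTree) :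
    ∃ P : ParentMap V, P.graph = T := by
  have hc := hT.connected
  obtain ⟨r⟩ := hc.nonempty
  choose path hpath hlength using fun v => hc.exists_path_of_dist v r
  have hroot : (path r).snd = r := by
    rw [show path r = .nil by simpa using hlength r]
    rfl
  have hadj {v : V} (hv : v ≠ r) : T.Adj v (path v).snd := (path v).adj_snd (Walk.not_nil_of_ne hv)
  have hdist {v : V} (hv : v ≠ r) : T.dist (path v).snd r < T.dist v r := by
    calc T.dist (path v).snd r ≤ (path v).tail.length := dist_le _
      _ < (path v).tail.length + 1 := Nat.lt_succ_self _
      _ = T.dist v r := by rw [Walk.length_tail_add_one (Walk.not_nil_of_ne hv), hlength]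
  have hiterate (v : V) : ∃ n, (fun v => (path v).snd)^[n] v = r := by
    induction h : T.dist v r using Nat.strong_induction_on generalizing v with
    | _ d ih =>
      by_cases hv : v = r
      · exact ⟨0, hv⟩
      · obtain ⟨n, hn⟩ := ih _ (h ▸ hdist hv) _ rfl
        exact ⟨n + 1, hn⟩
  refine ⟨⟨r, fun v => (path v).snd, hroot, hiterate⟩, ?_⟩
  have hsnd {u v : V} (huv : T.Adj u v) (h : T.dist u r = T.dist v r + 1) : (path u).snd = v := by
    have hcons : (Walk.cons huv (path v)).IsPath :=
      Walk.isPath_of_length_eq_dist _ (by rw [Walk.length_cons, hlength, h])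
    have heq : path u = .cons huv (path v) := congrArg Subtype.val <|
      (hT.isAcyclic.subsingleton_path u r).elim ⟨_, hpath u⟩ ⟨_, hcons⟩
    rw [heq, Walk.snd_cons]
  ext u v
  rw [ParentMap.graph_adj]
  constructor
  · rintro ⟨hne, rfl | rfl⟩
    · exact hadj fun h => hne (by subst h; exact hroot.symm)
    · exact (hadj fun h => hne (by subst h; exact hroot)).symm
  · intro huv
    refine ⟨huv.ne, ?_⟩
    have := hT.dist_eq_dist_add_one_of_adj r huv
    rw [dist_comm (u := r), dist_comm (u := r)] at this
    exact this.imp (hsnd huv) (hsnd huv.symm)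

/-! ### The binary tree and combs -/

/-- The infinite binary tree. Its vertices are finite binary words, and the parent of a word is
obtained by deleting its first letter. -/
def binaryTree : ParentMap (List Bool) where
  root := []
  parent := List.tail
  parent_root := rfl
  exists_iterate_eq_root w := by
    induction w with
    | nil => exact ⟨0, rfl⟩
    | cons _ _ ih => exact ih.imp' Nat.succ fun _ h => h

theorem foldr_injective {α β : Type*} {f : α → β → β} {b : β} (hf : Function.Injective2 f)
    (hb : ∀ a x, f a x ≠ b) : Function.Injective (List.foldr f b) := by
  intro l
  induction l with
  | nil =>
    rintro (_ | ⟨a', l'⟩) h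
    exacts [rfl, absurd h.symm (hb _ _)]
  | cons a l ih =>
    rintro (_ | ⟨a', l'⟩) h
    · exact absurd h (hb _ _)
    · obtain ⟨rfl, hl⟩ := hf h
      rw [ih hl]

namespace ParentMap

variable {V : Type*} (P : ParentMap V) {n : V → ℕ} (child : ∀ x, Fin (n x + 2) ≃ P.children x)

/-- The comb of `P` replaces each vertex `x` with `n x + 2` children by a path of `n x + 1`
vertices. This map gives the two children of a comb vertex `⟨x, i⟩`: the initial vertex of the path
of the `i`-th child of `x`, and the next vertex on the path of `x`. The end of the path leads to the
last child instead, so that every comb vertex has exactly two children. -/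
def combStep : Bool → (Σ x, Fin (n x + 1)) → Σ x, Fin (n x + 1)
  | false, ⟨x, i⟩ => ⟨child x i.castSucc, 0⟩
  | true, ⟨x, i⟩ => Fin.lastCases ⟨child x (Fin.last _), 0⟩ (fun j => ⟨x, j.succ⟩) i

@[simp] theorem combStep_false (x : V) (i : Fin (n x + 1)) :
    P.combStep child false ⟨x, i⟩ = ⟨child x i.castSucc, 0⟩ := rfl

@[simp] theorem combStep_true_last (x : V) :
    P.combStep child true ⟨x, Fin.last _⟩ = ⟨child x (Fin.last _), 0⟩ := by
  rw [combStep, Fin.lastCases_last]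

@[simp] theorem combStep_true_castSucc (x : V) (j : Fin (n x)) :
    P.combStep child true ⟨x, j.castSucc⟩ = ⟨x, j.succ⟩ := by
  rw [combStep, Fin.lastCases_castSucc]

theorem exists_combStep_eq {x y : V} (hy : y ∈ P.children x) :
    ∃ b i, P.combStep child b ⟨x, i⟩ = ⟨y, 0⟩ := by
  obtain ⟨k, hk⟩ := (child x).surjective ⟨y, hy⟩
  cases k using Fin.lastCases with
  | last => exact ⟨true, Fin.last _, by rw [combStep_true_last, hk]⟩
  | cast i => exact ⟨false, i, by rw [combStep_false, hk]⟩

theorem combStep_ne_root (b : Bool) (s : Σ x, Fin (n x + 1)) :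
    P.combStep child b s ≠ ⟨P.root, 0⟩ := by
  obtain ⟨x, i⟩ := s
  intro h
  have hfst : (P.combStep child b ⟨x, i⟩).1 = P.root := congrArg Sigma.fst h
  have hchild (k : Fin (n x + 2)) : (child x k : V) ≠ P.root := (child x k).2.1
  cases b with
  | false => exact hchild _ hfst
  | true =>
    cases i using Fin.lastCases with
    | last => exact hchild _ (by rwa [combStep_true_last] at hfst)
    | cast j =>
      rw [combStep_true_castSucc] at h
      exact Nat.succ_ne_zero _ (congrArg (fun s : Σ x, Fin (n x + 1) => (s.2 : ℕ)) h)

theorem combStep_injective2 : Function.Injective2 (P.combStep child) := by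
  rintro b b' ⟨x, i⟩ ⟨x', i'⟩ h
  have hcoords {s t : Σ x, Fin (n x + 1)} (h : s = t) : s.1 = t.1 ∧ (s.2 : ℕ) = t.2 :=
    h ▸ ⟨rfl, rfl⟩
  have hchild {k : Fin (n x + 2)} {k' : Fin (n x' + 2)} (h : (child x k : V) = child x' k') :
      x = x' ∧ (k : ℕ) = k' := by
    obtain rfl : x = x' := by rw [← (child x k).2.2, h, (child x' k').2.2]
    exact ⟨rfl, congrArg Fin.val ((child x).injective (Subtype.ext h))⟩
  suffices b = b' ∧ x = x' ∧ (i : ℕ) = i' by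
    obtain ⟨rfl, rfl, hi⟩ := this
    exact ⟨rfl, by rw [Fin.ext hi]⟩
  cases b <;> cases b' <;> cases i using Fin.lastCases <;> cases i' using Fin.lastCases <;>
    (simp only [combStep_false, combStep_true_last, combStep_true_castSucc] at h
     have := hcoords h
     grind)

theorem comb_bijective :
    Function.Bijective (List.foldr (P.combStep child) ⟨P.root, 0⟩) := by
  refine ⟨foldr_injective (P.combStep_injective2 child) (P.combStep_ne_root child), ?_⟩
  have step (b : Bool) {s : Σ x, Fin (n x + 1)} :
      s ∈ Set.range (List.foldr (P.combStep child) ⟨P.root, 0⟩) →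
        P.combStep child b s ∈ Set.range (List.foldr (P.combStep child) ⟨P.root, 0⟩) := by
    rintro ⟨w, rfl⟩
    exact ⟨b :: w, rfl⟩
  rintro ⟨x, i⟩
  induction x using P.induction_parent with
  | root =>
    induction i using Fin.induction with
    | zero => exact ⟨[], rfl⟩
    | succ j ih => exact P.combStep_true_castSucc child _ j ▸ step true ih
  | step x hx ih =>
    induction i using Fin.induction with
    | zero =>
      obtain ⟨b, i, h⟩ := P.exists_combStep_eq child ⟨hx, rfl⟩
      exact h ▸ step b (ih i)
    | succ j ih => exact P.combStep_true_castSucc child _ j ▸ step true ih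

/-- The comb of `P`, with binary words as addresses of its vertices. -/
noncomputable def combEquiv : List Bool ≃ Σ x, Fin (n x + 1) :=
  .ofBijective _ (P.comb_bijective child)

theorem dist_combEquiv_symm_combStep_le (b : Bool) (s : Σ x, Fin (n x + 1)) :
    binaryTree.graph.dist ((P.combEquiv child).symm s)
      ((P.combEquiv child).symm (P.combStep child b s)) ≤ 1 := by
  obtain ⟨w, rfl⟩ := (P.combEquiv child).surjective s
  have hcons : P.combStep child b (P.combEquiv child w) = P.combEquiv child (b :: w) := rfl
  rw [hcons, Equiv.symm_apply_apply, Equiv.symm_apply_apply, dist_comm]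
  exact binaryTree.dist_parent_le (b :: w)

theorem dist_combEquiv_symm_zero_le (x : V) (i : Fin (n x + 1)) :
    binaryTree.graph.dist ((P.combEquiv child).symm ⟨x, 0⟩)
      ((P.combEquiv child).symm ⟨x, i⟩) ≤ i := by
  induction i using Fin.induction with
  | zero => simp
  | succ j ih =>
    have hstep := P.dist_combEquiv_symm_combStep_le child true ⟨x, j.castSucc⟩
    rw [combStep_true_castSucc] at hstep
    exact (binaryTree.connected_graph.dist_triangle).trans (add_le_add ih hstep)

theorem dist_fst_combStep_le (b : Bool) (s : Σ x, Fin (n x + 1)) :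
    P.graph.dist s.1 (P.combStep child b s).1 ≤ 1 := by
  obtain ⟨x, i⟩ := s
  have hchild (k : Fin (n x + 2)) : P.graph.dist x (child x k) ≤ 1 :=
    P.dist_le_one_iff.2 (Or.inr (Or.inr (child x k).2))
  cases b with
  | false => exact hchild _
  | true =>
    cases i using Fin.lastCases with
    | last => simpa using hchild _
    | cast j => simp

theorem dist_combEquiv_symm_le {M : ℕ} (hM : ∀ x, n x ≤ M) {s t : Σ x, Fin (n x + 1)}
    (h : P.graph.dist s.1 t.1 ≤ 1) :
    binaryTree.graph.dist ((P.combEquiv child).symm s) ((P.combEquiv child).symm t)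
      ≤ 3 * M + 1 := by
  set ψ := (P.combEquiv child).symm
  have htri {u v w : List Bool} :=
    binaryTree.connected_graph.dist_triangle (u := u) (v := v) (w := w)
  have hspine (x : V) (i : Fin (n x + 1)) : binaryTree.graph.dist (ψ ⟨x, 0⟩) (ψ ⟨x, i⟩) ≤ M :=
    (P.dist_combEquiv_symm_zero_le child x i).trans ((Nat.le_of_lt_succ i.2).trans (hM x))
  have hfiber (x : V) (i j : Fin (n x + 1)) :
      binaryTree.graph.dist (ψ ⟨x, i⟩) (ψ ⟨x, j⟩) ≤ 2 * M := by
    have h₁ := htri (u := ψ ⟨x, i⟩) (v := ψ ⟨x, 0⟩) (w := ψ ⟨x, j⟩)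
    rw [SimpleGraph.dist_comm (v := ψ ⟨x, 0⟩)] at h₁
    linarith [hspine x i, hspine x j]
  have hchild {x y : V} (i : Fin (n x + 1)) (j : Fin (n y + 1)) (hy : y ∈ P.children x) :
      binaryTree.graph.dist (ψ ⟨x, i⟩) (ψ ⟨y, j⟩) ≤ 3 * M + 1 := by
    obtain ⟨b, k, hk⟩ := P.exists_combStep_eq child hy
    have h₁ := htri (u := ψ ⟨x, i⟩) (v := ψ ⟨x, k⟩) (w := ψ ⟨y, j⟩)
    have h₂ := htri (u := ψ ⟨x, k⟩) (v := ψ ⟨y, 0⟩) (w := ψ ⟨y, j⟩)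
    have h₃ := P.dist_combEquiv_symm_combStep_le child b ⟨x, k⟩
    rw [hk] at h₃
    linarith [hfiber x i k, hspine y j]
  obtain ⟨x, i⟩ := s
  obtain ⟨y, j⟩ := t
  rcases P.dist_le_one_iff.1 h with rfl | h | h
  · linarith [hfiber x i j]
  · rw [SimpleGraph.dist_comm]
    exact hchild j i h
  · exact hchild i j h

theorem quasiIsometric_binaryTree {M : ℕ} (htwo : ∀ x, (P.children x).Nontrivial)
    (hM : ∀ x, (P.children x).encard ≤ M) : QuasiIsometric binaryTree.graph P.graph := by
  have hfin (x : V) : (P.children x).Finite := Set.finite_of_encard_le_coe (hM x)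
  have hncard (x : V) : 2 ≤ (P.children x).ncard ∧ (P.children x).ncard ≤ M := by
    have hle := hM x
    rw [← (hfin x).cast_ncard_eq] at hle
    have := (hfin x).to_subtype
    exact ⟨Set.one_lt_ncard_iff_nontrivial.2 (htwo x), mod_cast hle⟩
  have child (x : V) : Fin ((P.children x).ncard - 2 + 2) ≃ P.children x := by
    have := (hfin x).to_subtype
    exact (Finite.equivFinOfCardEq (Nat.sub_add_cancel (hncard x).1).symm).symm
  let φ := P.combEquiv child
  have hadj (u v : List Bool) (h : binaryTree.graph.Adj u v) :
      P.graph.dist (φ u).1 (φ v).1 ≤ 3 * M + 1 := by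
    refine le_trans ?_ (Nat.le_add_left _ _)
    have hstep (w : List Bool) (hw : w ≠ []) : P.graph.dist (φ w.tail).1 (φ w).1 ≤ 1 := by
      obtain ⟨b, w, rfl⟩ := List.exists_cons_of_ne_nil hw
      exact P.dist_fst_combStep_le child b (φ w)
    rcases binaryTree.dist_le_one_iff.1 (dist_eq_one_iff_adj.2 h).le
      with rfl | ⟨hu, rfl⟩ | ⟨hv, rfl⟩
    · simp
    · rw [SimpleGraph.dist_comm]
      exact hstep u hu
    · exact hstep v hv
  refine quasiIsometric_of_surjective binaryTree.connected_graph P.connected_graph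
    (f := fun w => (φ w).1) (fun x => ⟨φ.symm ⟨x, 0⟩, by simp⟩) hadj fun u v h => ?_
  simpa [φ] using P.dist_combEquiv_symm_le child
    (fun x => (Nat.sub_le _ _).trans (hncard x).2) (s := φ u) (t := φ v) h

end ParentMap

/-! ### Restriction to a set of vertices -/

namespace ParentMap

variable {V : Type*} (P : ParentMap V) {X : Set V} {u v : V} {n : ℕ}

theorem exists_iterate_mem (hX : P.root ∈ X) (v : V) : ∃ n, P.parent^[n] v ∈ X :=
  (P.exists_iterate_eq_root v).imp fun _ h => Set.mem_of_eq_of_mem h hX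

variable (hX : P.root ∈ X)

open Classical in
/-- The first vertex of `X` met on the way from `v` up to the root, where `X` contains the root. -/
noncomputable def firstAncestor (v : V) : X :=
  ⟨P.parent^[Nat.find (P.exists_iterate_mem hX v)] v, Nat.find_spec (P.exists_iterate_mem hX v)⟩

theorem firstAncestor_eq (hn : P.parent^[n] v ∈ X) (hlt : ∀ m < n, P.parent^[m] v ∉ X) :
    P.firstAncestor hX v = ⟨P.parent^[n] v, hn⟩ := by
  classical
  have hfind := (Nat.find_eq_iff (P.exists_iterate_mem hX v)).2 ⟨hn, fun m hm => hlt m hm⟩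
  exact Subtype.ext (congrArg (P.parent^[·] v) hfind)

theorem firstAncestor_of_mem (hv : v ∈ X) : P.firstAncestor hX v = ⟨v, hv⟩ :=
  P.firstAncestor_eq hX (n := 0) hv fun _ h => absurd h (Nat.not_lt_zero _)

theorem exists_firstAncestor_eq_iterate (hn : P.parent^[n] v ∈ X) :
    ∃ m ≤ n, (P.firstAncestor hX v : V) = P.parent^[m] v := by
  classical
  exact ⟨_, Nat.find_min' (P.exists_iterate_mem hX v) hn, rfl⟩

theorem firstAncestor_parent (hv : v ∉ X) :
    P.firstAncestor hX (P.parent v) = P.firstAncestor hX v := by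
  obtain ⟨n, hn, hlt⟩ : ∃ n, P.parent^[n] v ∈ X ∧ ∀ m < n, P.parent^[m] v ∉ X := by
    classical
    have hex := P.exists_iterate_mem hX v
    exact ⟨Nat.find hex, Nat.find_spec hex, fun m => Nat.find_min hex⟩
  cases n with
  | zero => exact absurd hn hv
  | succ n =>
    rw [P.firstAncestor_eq hX hn hlt, P.firstAncestor_eq hX (v := P.parent v) (n := n) hn]
    · rfl
    · exact fun m hm => hlt (m + 1) (Nat.succ_lt_succ hm)

/-- The rooted tree induced on a set of vertices containing the root: the parent of `x` is the
nearest proper ancestor of `x` lying in the set. -/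
noncomputable def restrict : ParentMap X where
  root := ⟨P.root, hX⟩
  parent x := P.firstAncestor hX (P.parent x)
  parent_root := by rw [parent_root, firstAncestor_of_mem]
  exists_iterate_eq_root x := by
    induction h : P.depth x using Nat.strong_induction_on generalizing x with
    | _ d ih =>
      by_cases hx : (x : V) = P.root
      · exact ⟨0, Subtype.ext hx⟩
      · have hdepth : P.depth (P.firstAncestor hX (P.parent x)) < d := by
          have := P.depth_parent_add_one hx
          rw [firstAncestor, depth_iterate]
          omega
        obtain ⟨n, hn⟩ := ih _ hdepth _ rfl
        exact ⟨n + 1, hn⟩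

theorem dist_restrict_firstAncestor_le (h : P.graph.Adj u v) :
    (P.restrict hX).graph.dist (P.firstAncestor hX u) (P.firstAncestor hX v) ≤ 1 := by
  have hparent (v : V) :
      (P.restrict hX).graph.dist (P.firstAncestor hX v) (P.firstAncestor hX (P.parent v)) ≤ 1 := by
    by_cases hv : v ∈ X
    · rw [P.firstAncestor_of_mem hX hv]
      exact (P.restrict hX).dist_parent_le ⟨v, hv⟩
    · simp [P.firstAncestor_parent hX hv]
  rcases (P.graph_adj.1 h).2 with rfl | rfl
  · exact hparent u
  · rw [SimpleGraph.dist_comm]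
    exact hparent v

theorem quasiIsometric_restrict {D : ℕ} (hD : ∀ v, ∃ n ≤ D, P.parent^[n] v ∈ X) :
    QuasiIsometric P.graph (P.restrict hX).graph := by
  have htri {u v w : V} := P.connected_graph.dist_triangle (u := u) (v := v) (w := w)
  have near (v : V) : P.graph.dist v (P.firstAncestor hX v) ≤ D := by
    obtain ⟨n, hn, hmem⟩ := hD v
    obtain ⟨m, hm, heq⟩ := P.exists_firstAncestor_eq_iterate hX hmem
    rw [heq]
    exact (P.dist_iterate_le m v).trans (hm.trans hn)
  have hparent (x : X) : P.graph.dist x ((P.restrict hX).parent x) ≤ D + 1 := by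
    have : P.graph.dist (P.parent x) ((P.restrict hX).parent x) ≤ D := near (P.parent x)
    linarith [htri (u := x) (v := P.parent x) (w := (P.restrict hX).parent x), P.dist_parent_le x]
  have hadj (x y : X) (h : (P.restrict hX).graph.dist x y ≤ 1) : P.graph.dist x y ≤ D + 1 := by
    rcases (P.restrict hX).dist_le_one_iff.1 h with rfl | ⟨-, rfl⟩ | ⟨-, rfl⟩
    · simp
    · exact hparent x
    · rw [SimpleGraph.dist_comm]
      exact hparent y
  refine quasiIsometric_of_surjective P.connected_graph (P.restrict hX).connected_graph
    (f := P.firstAncestor hX) (L := 3 * D + 1) (fun x => ⟨x, P.firstAncestor_of_mem hX x.2⟩)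
    (fun u v h => (P.dist_restrict_firstAncestor_le hX h).trans (Nat.le_add_left _ _))
    fun u v h => ?_
  have hv := near v
  rw [SimpleGraph.dist_comm] at hv
  linarith [near u, hadj _ _ h, htri (u := u) (v := P.firstAncestor hX u) (w := v),
    htri (u := P.firstAncestor hX u) (v := P.firstAncestor hX v) (w := v)]

end ParentMap

/-! ### Bushy trees -/

/-- Around every vertex, the ball of radius `N` separates three infinite sets of vertices from each
other: every vertex is at bounded distance from a place where the graph branches. -/
def IsBushy {V : Type*} (G : SimpleGraph V) (N : ℕ) : Prop :=
  ∀ v, ∃ C : Fin 3 → Set V, (∀ i, (C i).Infinite) ∧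
    ∀ i j, i ≠ j → ∀ x ∈ C i, ∀ y ∈ C j, ∀ w : G.Walk x y, ∃ z ∈ w.support, G.dist v z ≤ N

theorem IsBushy.infinite {V : Type*} {G : SimpleGraph V} {N : ℕ} [Nonempty V]
    (hG : IsBushy G N) : Infinite V := by
  obtain ⟨C, hC, -⟩ := hG (Classical.arbitrary V)
  exact Set.infinite_univ_iff.1 ((hC 0).mono (Set.subset_univ _))

namespace ParentMap

variable {V : Type*} (P : ParentMap V) {b v z : V} {K N : ℕ}

theorem exists_ne_mem_level_infinite (hfin : ∀ v, (P.graph.neighborSet v).Finite)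
    (hP : IsBushy P.graph N) (hz : z ∈ P.level b (N + 1)) :
    ∃ x ∈ P.level b (2 * N + 2), ∃ y ∈ P.level b (2 * N + 2), x ≠ y ∧
      (P.descendants x).Infinite ∧ (P.descendants y).Infinite := by
  obtain ⟨C, hC, hsep⟩ := hP z
  have hball (v : V) (hv : P.graph.dist z v ≤ N) : v ∈ P.descendants b :=
    P.mem_descendants_of_dist_le (P.level_subset_descendants hz) (by rw [hz.1]; omega) hv
  -- The complement of the branch at `b` is connected and misses the ball around `z`, so at most one
  -- of the three sets leaves the branch. Dually, a branch below the ball meets at most one of them.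
  have hsubset (i j : Fin 3) (hij : i ≠ j) : C i ⊆ P.descendants b ∨ C j ⊆ P.descendants b := by
    by_contra! hcon
    obtain ⟨u, huC, hu⟩ := Set.not_subset.1 hcon.1
    obtain ⟨v, hvC, hv⟩ := Set.not_subset.1 hcon.2
    obtain ⟨w, hw⟩ := P.exists_walk_in_compl_descendants hu hv
    obtain ⟨t, ht, hdist⟩ := hsep i j hij u huC v hvC w
    exact hw t ht (hball t hdist)
  obtain ⟨i, j, hij, hi, hj⟩ :
      ∃ i j, i ≠ j ∧ C i ⊆ P.descendants b ∧ C j ⊆ P.descendants b := by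
    grind [hsubset 0 1 (by decide), hsubset 0 2 (by decide), hsubset 1 2 (by decide)]
  have hdeep {k : Fin 3} (hk : C k ⊆ P.descendants b) :
      ∃ x ∈ P.level b (2 * N + 2), (C k ∩ P.descendants x).Infinite :=
    P.exists_mem_level_inter_infinite hfin (by rw [Set.inter_eq_left.2 hk]; exact hC k) _
  obtain ⟨x, hx, hxinf⟩ := hdeep hi
  obtain ⟨y, hy, hyinf⟩ := hdeep hj
  refine ⟨x, hx, y, hy, ?_, hxinf.mono Set.inter_subset_right, hyinf.mono Set.inter_subset_right⟩
  rintro rfl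
  obtain ⟨u, huC, hu⟩ := hxinf.nonempty
  obtain ⟨v, hvC, hv⟩ := hyinf.nonempty
  obtain ⟨w, hw⟩ := P.exists_walk_in_descendants hu hv
  obtain ⟨t, ht, hdist⟩ := hsep i j hij u huC v hvC w
  have h₁ := P.depth_le_of_mem_descendants (hw t ht)
  have h₂ := P.depth_le_depth_add_dist t z
  rw [SimpleGraph.dist_comm] at h₂
  have := hx.1
  have := hz.1
  omega

theorem infinite_descendants_iterate (hfin : ∀ v, (P.graph.neighborSet v).Finite)
    (hP : IsBushy P.graph N) (v : V) : (P.descendants (P.parent^[N + 1] v)).Infinite := by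
  by_cases hv : P.depth v ≤ N
  · have := P.connected_graph.nonempty
    have := hP.infinite
    rw [P.depth_le_iff.1 (hv.trans N.le_succ), descendants_root]
    exact Set.infinite_univ
  · have hlevel : v ∈ P.level (P.parent^[N + 1] v) (N + 1) :=
      ⟨by rw [depth_iterate]; omega, rfl⟩
    obtain ⟨x, hx, -, -, -, hinf, -⟩ := P.exists_ne_mem_level_infinite hfin hP hlevel
    exact hinf.mono (P.descendants_subset (P.level_subset_descendants hx))

theorem encard_level_le {d : ℕ} (hd : ∀ v, (P.graph.neighborSet v).encard ≤ d) (x : V) (k : ℕ) :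
    (P.level x k).encard ≤ (d ^ k : ℕ) := by
  induction k with
  | zero =>
    rw [pow_zero, Nat.cast_one]
    have hsub : P.level x 0 ⊆ {x} := fun _ h => h.2
    exact (Set.encard_le_encard hsub).trans (Set.encard_singleton x).le
  | succ k ih =>
    set t := (Set.finite_of_encard_le_coe ih).toFinset
    have hsub : P.level x (k + 1) ⊆ ⋃ z ∈ t, P.graph.neighborSet z := fun v hv =>
      Set.mem_iUnion₂.2 ⟨P.parent v, (Set.Finite.mem_toFinset _).2 (P.parent_mem_level hv),
        P.adj_of_mem_children ⟨P.ne_root_of_mem_level_succ hv, rfl⟩⟩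
    have hcard : t.card ≤ d ^ k := by
      have : (t : Set V).encard ≤ (d ^ k : ℕ) := by rwa [Set.Finite.coe_toFinset]
      rwa [Set.encard_coe_eq_coe_finsetCard, Nat.cast_le] at this
    calc (P.level x (k + 1)).encard ≤ ∑ z ∈ t, (P.graph.neighborSet z).encard :=
          (Set.encard_le_encard hsub).trans (Finset.set_encard_biUnion_le t _)
      _ ≤ t.card • (d : ℕ∞) := Finset.sum_le_card_nsmul t _ _ fun z _ => hd z
      _ ≤ (d ^ (k + 1) : ℕ) := by
          rw [nsmul_eq_mul, pow_succ]
          exact_mod_cast Nat.mul_le_mul_right d hcard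

/-- The vertices with infinitely many descendants whose depth is a multiple of `K`. -/
def sparseCore (K : ℕ) : Set V := {v | (P.descendants v).Infinite ∧ K ∣ P.depth v}

theorem root_mem_sparseCore [Infinite V] (K : ℕ) : P.root ∈ P.sparseCore K :=
  ⟨by rw [descendants_root]; exact Set.infinite_univ, by rw [depth_root]; exact dvd_zero K⟩

theorem iterate_mem_sparseCore (hv : (P.descendants v).Infinite) {n : ℕ}
    (hn : K ∣ P.depth v - n) : P.parent^[n] v ∈ P.sparseCore K :=
  ⟨hv.mono (P.descendants_subset ⟨n, rfl⟩), by rwa [depth_iterate]⟩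

theorem restrict_sparseCore_parent (hroot : P.root ∈ P.sparseCore K) (hK : 0 < K)
    (y : P.sparseCore K) (hy : (y : V) ≠ P.root) :
    ((P.restrict hroot).parent y : V) = P.parent^[K] y := by
  obtain ⟨K, rfl⟩ := Nat.exists_eq_add_one_of_ne_zero hK.ne'
  have hle : K + 1 ≤ P.depth (y : V) := Nat.le_of_dvd (P.depth_pos hy) y.2.2
  refine congrArg Subtype.val (P.firstAncestor_eq hroot (n := K)
    (P.iterate_mem_sparseCore (n := K + 1) y.2.1 (Nat.dvd_sub y.2.2 dvd_rfl)) fun m hm h => ?_)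
  have hdvd : K + 1 ∣ m + 1 := by
    have h := h.2
    rw [← Function.iterate_succ_apply, depth_iterate] at h
    exact (Nat.dvd_sub_iff_right (by omega) y.2.2).1 h
  exact absurd (Nat.le_of_dvd m.succ_pos hdvd) (by omega)

theorem mem_children_restrict_sparseCore (hroot : P.root ∈ P.sparseCore K) (hK : 0 < K)
    {x y : P.sparseCore K} :
    y ∈ (P.restrict hroot).children x ↔ (y : V) ∈ P.level x K := by
  constructor
  · rintro ⟨hy, rfl⟩
    have hy' : (y : V) ≠ P.root := fun h => hy (Subtype.ext h)
    have hle : K ≤ P.depth (y : V) := Nat.le_of_dvd (P.depth_pos hy') y.2.2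
    refine ⟨?_, (P.restrict_sparseCore_parent hroot hK y hy').symm⟩
    rw [P.restrict_sparseCore_parent hroot hK y hy', depth_iterate]
    omega
  · intro h
    have hy : (y : V) ≠ P.root := fun hr => by
      have := h.1
      rw [hr, depth_root] at this
      omega
    exact ⟨fun hr => hy (congrArg Subtype.val hr),
      Subtype.ext ((P.restrict_sparseCore_parent hroot hK y hy).trans h.2)⟩

theorem exists_iterate_mem_sparseCore (hfin : ∀ v, (P.graph.neighborSet v).Finite)
    (hP : IsBushy P.graph N) (hK : 0 < K) (v : V) :
    ∃ n ≤ N + 1 + K, P.parent^[n] v ∈ P.sparseCore K := by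
  set u := P.parent^[N + 1] v
  refine ⟨P.depth u % K + (N + 1), ?_, ?_⟩
  · have := Nat.mod_lt (P.depth u) hK
    omega
  · rw [Function.iterate_add_apply]
    exact P.iterate_mem_sparseCore (P.infinite_descendants_iterate hfin hP v)
      (Nat.dvd_sub_mod _)

theorem quasiIsometric_binaryTree_of_isBushy {d : ℕ}
    (hd : ∀ v, (P.graph.neighborSet v).encard ≤ d) (hP : IsBushy P.graph N) :
    QuasiIsometric binaryTree.graph P.graph := by
  have hfin (v : V) : (P.graph.neighborSet v).Finite := Set.finite_of_encard_le_coe (hd v)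
  have := P.connected_graph.nonempty
  have := hP.infinite
  have hroot := P.root_mem_sparseCore (2 * N + 2)
  have hchildren {x y : P.sparseCore (2 * N + 2)} :=
    P.mem_children_restrict_sparseCore hroot (Nat.succ_pos _) (x := x) (y := y)
  have hrestrict : QuasiIsometric P.graph (P.restrict hroot).graph :=
    P.quasiIsometric_restrict hroot (P.exists_iterate_mem_sparseCore hfin hP (Nat.succ_pos _))
  refine .trans P.connected_graph ?_ (hrestrict.symm (P.restrict hroot).connected_graph)
  refine quasiIsometric_binaryTree _ (M := d ^ (2 * N + 2)) (fun x => ?_) fun x => ?_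
  · obtain ⟨z, hz, -⟩ := P.exists_mem_level_inter_infinite hfin (C := Set.univ) (b := x)
      (by rw [Set.univ_inter]; exact x.2.1) (N + 1)
    obtain ⟨y, hy, y', hy', hne, hinf, hinf'⟩ := P.exists_ne_mem_level_infinite hfin hP hz
    have hcore {y : V} (hy : y ∈ P.level x (2 * N + 2)) (hinf : (P.descendants y).Infinite) :
        y ∈ P.sparseCore (2 * N + 2) := ⟨hinf, by rw [hy.1]; exact dvd_add x.2.2 dvd_rfl⟩
    exact ⟨⟨y, hcore hy hinf⟩, hchildren.2 hy, ⟨y', hcore hy' hinf'⟩, hchildren.2 hy',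
      fun h => hne (congrArg Subtype.val h)⟩
  · rw [← Subtype.val_injective.encard_image]
    refine (Set.encard_le_encard ?_).trans (P.encard_level_le hd x (2 * N + 2))
    rintro _ ⟨y, hy, rfl⟩
    exact hchildren.1 hy

end ParentMap

/-! ### Ends and orbits -/

section Ends

variable {V : Type*} {G : SimpleGraph V}

-- Mathlib's `end_componentCompl_infinite` is restricted to vertex types in `Type`.
theorem infinite_supp_end (e : G.end) (K : Finset V) :
    (ComponentCompl.supp (e.val (Opposite.op K))).Infinite :=
  (ComponentCompl.infinite_iff_in_all_ranges _).2 fun L h =>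
    ⟨e.val (Opposite.op L),
      e.prop (CategoryTheory.opHomOfLE (x := Opposite.op K) (y := Opposite.op L) h)⟩

theorem exists_finset_separating {ι : Type*} [Finite ι] (e : ι ↪ G.end) :
    ∃ (K : Finset V) (C : ι → Set V), (∀ i, (C i).Infinite) ∧
      ∀ i j, i ≠ j → ∀ x ∈ C i, ∀ y ∈ C j, ∀ w : G.Walk x y, ∃ z ∈ w.support, z ∈ K := by
  classical
  have := Fintype.ofFinite ι
  have hpair (i j : ι) : ∃ K : Finset V, i ≠ j →
      (e i).val (Opposite.op K) ≠ (e j).val (Opposite.op K) := by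
    by_contra! hcon
    exact (hcon ∅).1 (e.injective (Subtype.ext (funext fun K => (hcon K.unop).2)))
  choose K hK using hpair
  obtain ⟨L, hL⟩ : ∃ L, ∀ i j, K i j ⊆ L :=
    ⟨Finset.univ.biUnion fun i => Finset.univ.biUnion (K i), fun i j =>
      (Finset.subset_biUnion_of_mem (K i) (Finset.mem_univ j)).trans
        (Finset.subset_biUnion_of_mem (fun i => Finset.univ.biUnion (K i)) (Finset.mem_univ i))⟩
  have hne {i j : ι} (hij : i ≠ j) : (e i).val (Opposite.op L) ≠ (e j).val (Opposite.op L) := by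
    intro h
    have hrestrict (i' : ι) := (e i').prop
      (CategoryTheory.opHomOfLE (x := Opposite.op (K i j)) (y := Opposite.op L) (hL i j))
    exact hK i j hij ((hrestrict i).symm.trans ((congrArg _ h).trans (hrestrict j)))
  refine ⟨L, fun i => ((e i).val (Opposite.op L)).supp, fun i => infinite_supp_end (e i) L, ?_⟩
  rintro i j hij x ⟨_, hx⟩ y ⟨_, hy⟩ w
  by_contra! hcon
  refine hne hij ?_
  rw [← hx, ← hy]
  exact ConnectedComponent.sound ⟨w.induce _ fun z hz hzL => hcon z hz hzL⟩

theorem exists_isBushy (hG : G.Connected) (hq : QuasiTransitive G) (e : Fin 3 ↪ G.end) :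
    ∃ N, IsBushy G N := by
  obtain ⟨K, C, hC, hsep⟩ := exists_finset_separating e
  obtain ⟨s, hs, hq⟩ := hq
  obtain ⟨N, hN⟩ := ((hs.prod K.finite_toSet).image fun p => G.dist p.1 p.2).bddAbove
  refine ⟨N, fun v => ?_⟩
  obtain ⟨u, hu, g, rfl⟩ := hq v
  refine ⟨fun i => g '' C i, fun i => (hC i).image g.injective.injOn, ?_⟩
  rintro i j hij _ ⟨x, hx, rfl⟩ _ ⟨y, hy, rfl⟩ w
  obtain ⟨z, hz, hzK⟩ := hsep i j hij x hx y hy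
    ((w.map g.symm.toHom).copy (g.symm_apply_apply x) (g.symm_apply_apply y))
  rw [Walk.support_copy, Walk.support_map, List.mem_map] at hz
  obtain ⟨z, hz, rfl⟩ := hz
  refine ⟨z, hz, ?_⟩
  have hdist := dist_map_le_mul_dist hG hG (f := g) (L := 1)
    (fun a b hab => (dist_eq_one_iff_adj.2 (g.map_adj_iff.2 hab)).le) u (g.symm z)
  rw [g.apply_symm_apply, one_mul] at hdist
  exact hdist.trans (hN ⟨(u, g.symm z), ⟨hu, hzK⟩, rfl⟩)

theorem exists_encard_neighborSet_le (hG : LocallyFiniteGraph G) (hq : QuasiTransitive G) :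
    ∃ d : ℕ, ∀ v, (G.neighborSet v).encard ≤ d := by
  obtain ⟨s, hs, hq⟩ := hq
  obtain ⟨d, hd⟩ := (hs.image fun v => (G.neighborSet v).ncard).bddAbove
  refine ⟨d, fun v => ?_⟩
  obtain ⟨u, hu, g, rfl⟩ := hq v
  rw [← Set.encard_congr (g.mapNeighborSet u), ← (hG u).cast_ncard_eq]
  exact_mod_cast hd ⟨u, hu, rfl⟩

end Ends

/-! ### Comparison of trees -/

theorem quasiIsometric_binaryTree_of_isTree {V : Type*} {T : SimpleGraph V} (hT : T.IsTree)
    (hdeg : ∃ d : ℕ, ∀ v, (T.neighborSet v).encard ≤ d) (hbushy : ∃ N, IsBushy T N) :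
    QuasiIsometric binaryTree.graph T := by
  obtain ⟨P, rfl⟩ := exists_parentMap_graph_eq hT
  obtain ⟨d, hd⟩ := hdeg
  obtain ⟨N, hN⟩ := hbushy
  exact P.quasiIsometric_binaryTree_of_isBushy hd hN

theorem trees_quasiIsometric_general {V : Type u} {W : Type v} {T₁ : SimpleGraph V}
    {T₂ : SimpleGraph W} (h₁ : T₁.IsTree) (h₂ : T₂.IsTree)
    (hdeg₁ : ∃ d : ℕ, ∀ v, (T₁.neighborSet v).encard ≤ d)
    (hdeg₂ : ∃ d : ℕ, ∀ w, (T₂.neighborSet w).encard ≤ d)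
    (hbushy₁ : ∃ N, IsBushy T₁ N) (hbushy₂ : ∃ N, IsBushy T₂ N) : QuasiIsometric T₁ T₂ :=
  ((quasiIsometric_binaryTree_of_isTree h₁ hdeg₁ hbushy₁).symm h₁.connected).trans h₂.connected
    (quasiIsometric_binaryTree_of_isTree h₂ hdeg₂ hbushy₂)

/-- **Lemma.** Every two locally finite trees with infinitely many ends and finitely many
orbits of vertices (under their automorphism groups) are quasi-isometric. -/
theorem trees_quasiIsometric {V W : Type u} (T1 : SimpleGraph V) (T2 : SimpleGraph W)
    (h1 : T1.IsTree) (h2 : T2.IsTree)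
    (hlf1 : LocallyFiniteGraph T1) (hlf2 : LocallyFiniteGraph T2)
    (he1 : Infinite T1.end) (he2 : Infinite T2.end)
    (hq1 : QuasiTransitive T1) (hq2 : QuasiTransitive T2) :
    QuasiIsometric T1 T2 := by
  exact trees_quasiIsometric_general h1 h2
    (exists_encard_neighborSet_le hlf1 hq1) (exists_encard_neighborSet_le hlf2 hq2)
    (exists_isBushy h1.connected hq1 (Fin.valEmbedding.trans (Infinite.natEmbedding _)))
    (exists_isBushy h2.connected hq2 (Fin.valEmbedding.trans (Infinite.natEmbedding _)))
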